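/- Let γ > 1 and let T be the Pikovsky map with parameter γ. There exist constants Λ > 1 and C_γ > 0, depending only on γ, such that for all n ≥ 1 and all admissible tuples (ℓ₀,…,ℓ_p): (a) λ(C_n(ℓ₀)) ≤ C_γ ℓ₀^{−γ/(γ−1)} for p = 0; (b) for p ≥ 1, λ(C_n(ℓ₀,…,ℓ_p)) ≤ min{Λ^{−1}, C_γ ℓ₀^{−γ/(γ−1)}} · ∏_{j=0}^{p−1} min{Λ^{−1}, C_γ(ℓ_{j+1}−ℓ_j)^{−γ/(γ−1)}}; (c) for all p ≥ 0, λ(C_n(ℓ₀,…,ℓ_p)) ≤ C_γ n^{−γ/(γ−1)}. -/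

import Mathlib

set_option autoImplicit false

open MeasureTheory Filter
open scoped ENNReal NNReal Topology

noncomputable section

/-- `T` is the Pikovsky map on `[-1,1]` with parameter `γ`: implicitly defined by
`x = (1+T(x))^γ/(2γ)` on `(0, 1/(2γ)]`, `x = T(x) + (1−T(x))^γ/(2γ)` on `[1/(2γ), 1]`, and
the odd symmetry `T(x) = −T(−x)` on `[-1, 0)`. -/
def IsPikovsky (γ : ℝ) (T : ℝ → ℝ) : Prop :=
  (∀ x ∈ Set.Icc (-1:ℝ) 1, T x ∈ Set.Icc (-1:ℝ) 1) ∧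
  (∀ x ∈ Set.Ioc (0:ℝ) (1/(2*γ)),
      T x ∈ Set.Icc (-1:ℝ) 0 ∧ x = (1 + T x) ^ γ / (2*γ)) ∧
  (∀ x ∈ Set.Icc (1/(2*γ)) 1,
      T x ∈ Set.Icc (0:ℝ) 1 ∧ x = T x + (1 - T x) ^ γ / (2*γ)) ∧
  (∀ x ∈ Set.Ico (-1:ℝ) 0, T x = - T (-x))

/-- Lebesgue measure on `[-1,1]` normalized to a probability measure. -/
def pikMeasure : Measure ℝ := (2⁻¹ : ℝ≥0∞) • (volume.restrict (Set.Icc (-1:ℝ) 1))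

instance : IsProbabilityMeasure pikMeasure := by
  constructor
  rw [pikMeasure, Measure.smul_apply, Measure.restrict_apply MeasurableSet.univ,
    Set.univ_inter, Real.volume_Icc, show ((1:ℝ) - -1 = 2) by norm_num,
    ENNReal.ofReal_ofNat, smul_eq_mul]
  exact ENNReal.inv_mul_cancel (by norm_num) (by norm_num)

/-- The sup-norm of `f` on `[-1,1]`. -/
def supIcc (f : ℝ → ℝ) : ℝ := ⨆ x : Set.Icc (-1:ℝ) 1, |f (x:ℝ)|

/-- The Lipschitz seminorm of `f` on `[-1,1]`. -/
def lipIcc (f : ℝ → ℝ) : ℝ :=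
  ⨆ p : (Set.Icc (-1:ℝ) 1) × (Set.Icc (-1:ℝ) 1),
    |f (p.1:ℝ) - f (p.2:ℝ)| / |(p.1:ℝ) - (p.2:ℝ)|

/-- `‖f‖_Lip = ‖f‖_∞ + Lip(f)` on `[-1,1]`. -/
def nLipIcc (f : ℝ → ℝ) : ℝ := supIcc f + lipIcc f

/-- `Δ_n^-`: the sets `Δ₀^- = T⁻¹(M₊) ∩ M₋` and `Δ_n^- = T⁻¹(Δ_{n-1}^-) ∩ M₋`,
where `M₋ = (-1,0)` and `M₊ = (0,1)`. -/
def DeltaM (T : ℝ → ℝ) : ℕ → Set ℝ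
  | 0 => T ⁻¹' (Set.Ioo (0:ℝ) 1) ∩ Set.Ioo (-1:ℝ) 0
  | n+1 => T ⁻¹' (DeltaM T n) ∩ Set.Ioo (-1:ℝ) 0

/-- `Δ_n^+`: the sets `Δ₀^+ = T⁻¹(M₋) ∩ M₊` and `Δ_n^+ = T⁻¹(Δ_{n-1}^+) ∩ M₊`. -/
def DeltaP (T : ℝ → ℝ) : ℕ → Set ℝ
  | 0 => T ⁻¹' (Set.Ioo (-1:ℝ) 0) ∩ Set.Ioo (0:ℝ) 1
  | n+1 => T ⁻¹' (DeltaP T n) ∩ Set.Ioo (0:ℝ) 1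

/-- `δ_n^- = T⁻¹(Δ_{n-1}^+) ∩ Δ₀^-` (for `n ≥ 1`). -/
def deltaMs (T : ℝ → ℝ) (n : ℕ) : Set ℝ := T ⁻¹' (DeltaP T (n-1)) ∩ DeltaM T 0

/-- `δ_n^+ = T⁻¹(Δ_{n-1}^-) ∩ Δ₀^+` (for `n ≥ 1`). -/
def deltaPs (T : ℝ → ℝ) (n : ℕ) : Set ℝ := T ⁻¹' (DeltaM T (n-1)) ∩ DeltaP T 0

/-- `δ_n = δ_n^- ∪ δ_n^+`. -/
def smallDelta (T : ℝ → ℝ) (n : ℕ) : Set ℝ := deltaMs T n ∪ deltaPs T n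

/-- `Δ_n = Δ_n^- ∪ Δ_n^+`. -/
def bigDelta (T : ℝ → ℝ) (n : ℕ) : Set ℝ := DeltaM T n ∪ DeltaP T n

/-- The base `Y = Δ₀^- ∪ Δ₀^+` of the first-return tower. -/
def Yset (T : ℝ → ℝ) : Set ℝ := DeltaM T 0 ∪ DeltaP T 0

/-- Lebesgue measure on `Y` normalized to a probability measure. -/
def mY (T : ℝ → ℝ) : Measure ℝ := (volume (Yset T))⁻¹ • volume.restrict (Yset T)

/-- The first return time to `Y`: `τ(x) = inf {n ≥ 1 : Tⁿ(x) ∈ Y}`. -/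
def tauY (T : ℝ → ℝ) (x : ℝ) : ℕ := sInf {n : ℕ | 1 ≤ n ∧ T^[n] x ∈ Yset T}

/-- The cylinder set `C_n(ℓ₀,…,ℓ_p) = (δ_{ℓ₀} ∪ Δ_{ℓ₀}) ∩ ⋂_{j<p} T^{-ℓ_j} δ_{ℓ_{j+1}-ℓ_j}`. -/
def cylinder (T : ℝ → ℝ) (p : ℕ) (ℓ : ℕ → ℕ) : Set ℝ :=
  (smallDelta T (ℓ 0) ∪ bigDelta T (ℓ 0)) ∩
    ⋂ j ∈ Finset.range p, T^[ℓ j] ⁻¹' (smallDelta T (ℓ (j+1) - ℓ j))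

/-!
Let `G` be the inverse branch of `T` at the neutral fixed point `1`. It is increasing and convex,
hence so are its iterates, and the slopes of `G^[n]` on `[0, G 0]` are at most its slope on
`[G 0, G (G 0)]`, which is proportional to `G^[n + 2] 0 - G^[n + 1] 0`. With `u n = 1 - G^[n] 0`
this increment is a multiple of `u (n + 1) ^ γ`, and the recursion
`u (n + 1) = u n - u n ^ γ / (2γ)` gives `u n ≤ C n ^ (-1 / (γ - 1))`. So an excursion of length
`d` contracts by `κ d = min 1 (K d ^ (-γ / (γ - 1)))`, with an extra factor `1 / 2` each time the
orbit switches sides. Composing the excursions, a cylinder has measure at most the product of the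
`3 / 4 * κ d` over its gaps `d`, which is (a) and (b). For (c), one of the `p + 1` gaps is at
least `n / (p + 1)`, and `(3 / 4) ^ p` absorbs the loss `(p + 1) ^ (γ / (γ - 1))`.
-/

section RealAnalysis

variable {α : Type*}

theorem monotoneOn_iterate [Preorder α] {f : α → α} {s : Set α} (hf : MonotoneOn f s)
    (hs : Set.MapsTo f s s) (n : ℕ) : MonotoneOn f^[n] s := by
  induction n with
  | zero => exact monotoneOn_id
  | succ n ih => exact ih.comp hf hs

theorem lipschitzOnWith_iterate [PseudoEMetricSpace α] {f : α → α} {s : Set α} {K : ℝ≥0}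
    (hf : LipschitzOnWith K f s) (hs : Set.MapsTo f s s) (n : ℕ) :
    LipschitzOnWith (K ^ n) f^[n] s := by
  induction n with
  | zero => simpa using LipschitzWith.id.lipschitzOnWith
  | succ n ih => exact ih.comp hf hs

theorem convexOn_iterate {𝕜 : Type*} [Semiring 𝕜] [PartialOrder 𝕜] [AddCommMonoid α]
    [PartialOrder α] [SMul 𝕜 α] {f : α → α} {s : Set α} (hf : ConvexOn 𝕜 s f)
    (hmono : MonotoneOn f s) (hs : Set.MapsTo f s s) (n : ℕ) : ConvexOn 𝕜 s f^[n] := by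
  induction n with
  | zero => exact convexOn_id hf.1
  | succ n ih =>
    refine ⟨hf.1, fun x hx y hy a b ha hb hab => ?_⟩
    simp only [Function.iterate_succ_apply']
    have hx' := hs.iterate n hx
    have hy' := hs.iterate n hy
    calc f (f^[n] (a • x + b • y))
        ≤ f (a • f^[n] x + b • f^[n] y) :=
          hmono (hs.iterate n (hf.1 hx hy ha hb hab)) (hf.1 hx' hy' ha hb hab)
            (ih.2 hx hy ha hb hab)
      _ ≤ a • f (f^[n] x) + b • f (f^[n] y) := hf.2 hx' hy' ha hb hab

theorem lipschitzOnWith_of_dist_le_mul_sub [PseudoMetricSpace α] {f : ℝ → α} {s : Set ℝ}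
    {K : ℝ≥0} (h : ∀ x ∈ s, ∀ y ∈ s, x < y → dist (f x) (f y) ≤ K * (y - x)) :
    LipschitzOnWith K f s := by
  refine LipschitzOnWith.of_dist_le_mul fun x hx y hy => ?_
  rcases lt_trichotomy x y with hxy | rfl | hxy
  · rw [dist_comm x, Real.dist_eq, abs_of_pos (sub_pos.2 hxy)]
    exact h x hx y hy hxy
  · simp
  · rw [dist_comm, Real.dist_eq, abs_of_pos (sub_pos.2 hxy)]
    exact h y hy x hx hxy

theorem slope_le_slope_of_convexOn {𝕜 : Type*} [Field 𝕜] [LinearOrder 𝕜] [IsStrictOrderedRing 𝕜]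
    {f : 𝕜 → 𝕜} {s : Set 𝕜} (hf : ConvexOn 𝕜 s f) {x y c d : 𝕜} (hx : x ∈ s) (hy : y ∈ s)
    (hc : c ∈ s) (hd : d ∈ s) (hxy : x < y) (hyc : y ≤ c) (hcd : c < d) :
    (f y - f x) / (y - x) ≤ (f d - f c) / (d - c) := by
  rcases hyc.eq_or_lt with rfl | hyc
  · exact hf.slope_mono_adjacent hx hd hxy hcd
  · exact (hf.slope_mono_adjacent hx hc hxy hyc).trans (hf.slope_mono_adjacent hy hd hyc hcd)

theorem lipschitzOnWith_of_convexOn_of_monotoneOn {f : ℝ → ℝ} {s : Set ℝ} (hf : ConvexOn ℝ s f)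
    (hmono : MonotoneOn f s) {c d : ℝ} (hc : c ∈ s) (hd : d ∈ s) (hcd : c < d) :
    LipschitzOnWith ((f d - f c) / (d - c)).toNNReal f (s ∩ Set.Iic c) := by
  refine lipschitzOnWith_of_dist_le_mul_sub fun x hx y hy hxy => ?_
  rw [dist_comm, Real.dist_eq, abs_of_nonneg (sub_nonneg.2 (hmono hx.1 hy.1 hxy.le)),
    ← div_le_iff₀ (sub_pos.2 hxy)]
  exact (slope_le_slope_of_convexOn hf hx.1 hy.1 hc hd hxy hy.2 hcd).trans
    (Real.le_coe_toNNReal _)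

theorem one_add_mul_le_one_sub_rpow_neg {β t : ℝ} (hβ : 0 ≤ β) (ht : t < 1) :
    1 + β * t ≤ (1 - t) ^ (-β) := by
  have hlog : Real.log (1 - t) ≤ -t := by
    linarith [Real.log_le_sub_one_of_pos (sub_pos.2 ht)]
  calc 1 + β * t ≤ Real.log (1 - t) * -β + 1 := by nlinarith
    _ ≤ (1 - t) ^ (-β) := by
      rw [Real.rpow_def_of_pos (sub_pos.2 ht)]
      exact Real.add_one_le_exp _

/- The discrete form of `d/dt u ^ (-β) = a * β` along the flow `u' = -a * u ^ (1 + β)`. -/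
theorem rpow_neg_add_mul_le {a β u : ℝ} (hβ : 0 ≤ β) (hu : 0 < u)
    (h : 0 < u - a * u ^ (1 + β)) :
    u ^ (-β) + a * β ≤ (u - a * u ^ (1 + β)) ^ (-β) := by
  have hfactor : u - a * u ^ (1 + β) = u * (1 - a * u ^ β) := by
    rw [Real.rpow_one_add' hu.le (by positivity)]; ring
  rw [hfactor] at h ⊢
  have ht : a * u ^ β < 1 := sub_pos.1 (pos_of_mul_pos_right h hu.le)
  calc u ^ (-β) + a * β = u ^ (-β) * (1 + β * (a * u ^ β)) := by
        rw [Real.rpow_neg hu.le]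
        field_simp
    _ ≤ u ^ (-β) * (1 - a * u ^ β) ^ (-β) := by
        gcongr
        exact one_add_mul_le_one_sub_rpow_neg hβ ht
    _ = (u * (1 - a * u ^ β)) ^ (-β) := (Real.mul_rpow hu.le (sub_pos.2 ht).le).symm

theorem natCast_mul_le_rpow_neg {a β : ℝ} (hβ : 0 ≤ β) {u : ℕ → ℝ} (hu : ∀ n, 0 < u n)
    (hstep : ∀ n, u (n + 1) = u n - a * u n ^ (1 + β)) (n : ℕ) :
    n * (a * β) ≤ u n ^ (-β) := by
  induction n with
  | zero => simpa using Real.rpow_nonneg (hu 0).le _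
  | succ n ih =>
    have hstep_n := rpow_neg_add_mul_le hβ (hu n) (hstep n ▸ hu (n + 1))
    rw [← hstep] at hstep_n
    push_cast
    linarith

theorem exists_forall_pow_mul_rpow_le {r : ℝ≥0} (hr₀ : 0 < r) (hr₁ : r < 1) (α : ℝ) :
    ∃ M : ℝ≥0, ∀ p : ℕ, r ^ p * ((p + 1 : ℕ) : ℝ≥0) ^ α ≤ M := by
  obtain ⟨k, hk⟩ := exists_nat_ge α
  obtain ⟨B, hB⟩ := (tendsto_pow_const_mul_const_pow_of_lt_one k r.coe_nonneg
    (NNReal.coe_lt_one.2 hr₁)).bddAbove_range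
  refine ⟨(B / r).toNNReal, fun p => NNReal.le_toNNReal_of_coe_le ?_⟩
  push_cast
  rw [le_div_iff₀ (NNReal.coe_pos.2 hr₀)]
  calc (r : ℝ) ^ p * ((p : ℝ) + 1) ^ α * r ≤ r ^ p * ((p : ℝ) + 1) ^ k * r := by
        rw [← Real.rpow_natCast _ k]
        gcongr
        exact le_add_of_nonneg_left p.cast_nonneg
    _ = ((p + 1 : ℕ) : ℝ) ^ k * r ^ (p + 1) := by push_cast; ring
    _ ≤ B := hB ⟨p + 1, rfl⟩

end RealAnalysis


section Gaps

/-- The bound `min {1, K t ^ (-α)}` for the contraction of a long inverse branch. Since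
`0 ^ (-α) = 0` for `α ≠ 0`, its value at `t = 0` is meaningless. -/
def truncPow (K : ℝ≥0) (α : ℝ) (t : ℝ≥0) : ℝ≥0 := min 1 (K * t ^ (-α))

theorem truncPow_le_one (K : ℝ≥0) (α : ℝ) (t : ℝ≥0) : truncPow K α t ≤ 1 := min_le_left _ _

theorem truncPow_le_mul_rpow (K : ℝ≥0) (α : ℝ) (t : ℝ≥0) : truncPow K α t ≤ K * t ^ (-α) :=
  min_le_right _ _

theorem truncPow_le_truncPow {K : ℝ≥0} {α : ℝ} (hα : 0 ≤ α) {s t : ℝ≥0} (hs : 0 < s)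
    (hst : s ≤ t) : truncPow K α t ≤ truncPow K α s := by
  simp only [truncPow, NNReal.rpow_neg]
  gcongr

theorem mul_truncPow_le_min {r C K : ℝ≥0} {α : ℝ} (hr : r ≤ 1) (hKC : K ≤ C) (t : ℝ≥0) :
    r * truncPow K α t ≤ min r (C * t ^ (-α)) :=
  le_min (mul_le_of_le_one_right' (truncPow_le_one K α t))
    ((mul_le_of_le_one_left' hr).trans ((truncPow_le_mul_rpow K α t).trans (by gcongr)))

theorem exists_div_le_gap (a : ℕ → ℝ) (p : ℕ) :
    a p / (p + 1) ≤ a 0 ∨ ∃ j < p, a p / (p + 1) ≤ a (j + 1) - a j := by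
  by_contra! hsmall
  have hsum : a p - a 0 ≤ p * (a p / (p + 1)) := by
    rw [← Finset.sum_range_sub, ← nsmul_eq_mul]
    simpa using Finset.sum_le_card_nsmul (Finset.range p) _ _
      fun j hj => (hsmall.2 j (Finset.mem_range.1 hj)).le
  have hsplit : p * (a p / (p + 1)) + a p / (p + 1) = a p := by field_simp
  linarith [hsmall.1]

theorem truncPow_mul_prod_gaps_le {K : ℝ≥0} {α : ℝ} (hα : 0 ≤ α) {p : ℕ} {ℓ : ℕ → ℕ}
    (hℓ : ∀ j < p, ℓ j ≤ ℓ (j + 1)) (hp : 0 < ℓ p) :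
    truncPow K α (ℓ 0) * ∏ j ∈ Finset.range p, truncPow K α (ℓ (j + 1) - ℓ j : ℕ) ≤
      truncPow K α (ℓ p / (p + 1 : ℕ)) := by
  have hpos : 0 < (ℓ p / (p + 1 : ℕ) : ℝ≥0) := by positivity
  rcases exists_div_le_gap (fun j => (ℓ j : ℝ)) p with h | ⟨j, hj, h⟩
  · refine (mul_le_of_le_one_right' (Finset.prod_le_one' fun _ _ => truncPow_le_one ..)).trans ?_
    exact truncPow_le_truncPow hα hpos (by exact_mod_cast h)
  · refine (mul_le_of_le_one_left' (truncPow_le_one ..)).trans ?_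
    rw [← Finset.mul_prod_erase _ _ (Finset.mem_range.2 hj)]
    refine (mul_le_of_le_one_right' (Finset.prod_le_one' fun _ _ => truncPow_le_one ..)).trans ?_
    refine truncPow_le_truncPow hα hpos ?_
    rw [← Nat.cast_sub (hℓ j hj)] at h
    exact_mod_cast h

/- By pigeonhole some gap is at least `n / (p + 1)`; the factor `r ^ p` absorbs the resulting
loss `(p + 1) ^ α`. -/
theorem mul_truncPow_mul_prod_gaps_le {K M r : ℝ≥0} {α : ℝ} (hα : 0 ≤ α) (hr : r ≤ 1)
    (hM : ∀ p : ℕ, r ^ p * ((p + 1 : ℕ) : ℝ≥0) ^ α ≤ M) {n p : ℕ} {ℓ : ℕ → ℕ}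
    (hℓ : ∀ j < p, ℓ j ≤ ℓ (j + 1)) (hn : 0 < n) (hnp : n ≤ ℓ p) :
    r * truncPow K α (ℓ 0) *
      ∏ j ∈ Finset.range p, r * truncPow K α (ℓ (j + 1) - ℓ j : ℕ) ≤ K * M * n ^ (-α) := by
  have hgap := (truncPow_mul_prod_gaps_le (K := K) hα hℓ (hn.trans_le hnp)).trans
    (truncPow_le_truncPow hα (s := n / (p + 1 : ℕ)) (by positivity) (by gcongr))
  calc _ = r * (r ^ p * (truncPow K α (ℓ 0) *
        ∏ j ∈ Finset.range p, truncPow K α (ℓ (j + 1) - ℓ j : ℕ))) := by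
        rw [Finset.prod_mul_distrib, Finset.prod_const, Finset.card_range]; ring
    _ ≤ r ^ p * (K * (n / (p + 1 : ℕ) : ℝ≥0) ^ (-α)) := by
        exact (mul_le_of_le_one_left' hr).trans
          (mul_le_mul' le_rfl (hgap.trans (truncPow_le_mul_rpow ..)))
    _ = K * (r ^ p * ((p + 1 : ℕ) : ℝ≥0) ^ α) * n ^ (-α) := by
        rw [NNReal.div_rpow, NNReal.rpow_neg _ α, NNReal.rpow_neg _ α, div_inv_eq_mul]; ring
    _ ≤ K * M * n ^ (-α) := by
        gcongr
        exact hM p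

end Gaps


section InverseBranches

open Set

/-- The modulus of the inverse branch of the Pikovsky map that switches between the two halves
of the interval: `T x = y > 0 > x` forces `x = -crossBranch γ y`. -/
def crossBranch (γ y : ℝ) : ℝ := (1 - y) ^ γ / (2 * γ)

/-- The inverse branch of the Pikovsky map at its neutral fixed point `1`: `x, T x > 0` forces
`x = neutralBranch γ (T x)`. -/
def neutralBranch (γ y : ℝ) : ℝ := y + crossBranch γ y

variable {γ : ℝ}

theorem crossBranch_nonneg (hγ : 0 ≤ γ) {y : ℝ} (hy : y ≤ 1) : 0 ≤ crossBranch γ y :=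
  div_nonneg (Real.rpow_nonneg (sub_nonneg.2 hy) γ) (by positivity)

theorem neutralBranch_zero (γ : ℝ) : neutralBranch γ 0 = 1 / (2 * γ) := by
  simp [neutralBranch, crossBranch]

theorem neutralBranch_one (hγ : γ ≠ 0) : neutralBranch γ 1 = 1 := by
  simp [neutralBranch, crossBranch, Real.zero_rpow hγ]

theorem antitoneOn_crossBranch (hγ : 0 ≤ γ) : AntitoneOn (crossBranch γ) (Iic 1) := by
  intro x _ y (hy : y ≤ 1) hxy
  have : 0 ≤ 1 - y := sub_nonneg.2 hy
  unfold crossBranch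
  gcongr

theorem lipschitzOnWith_crossBranch (hγ : 1 ≤ γ) :
    LipschitzOnWith (1 / 2) (crossBranch γ) (Icc 0 1) := by
  refine (convex_Icc 0 1).lipschitzOnWith_of_nnnorm_hasDerivWithin_le
    (f' := fun y => -((1 - y) ^ (γ - 1) / 2)) (fun y _ => ?_) fun y hy => ?_
  · have hderiv : HasDerivAt (crossBranch γ) (-1 * γ * (1 - y) ^ (γ - 1) / (2 * γ)) y :=
      (((hasDerivAt_id y).const_sub 1).rpow_const (.inr hγ)).div_const _
    exact (hderiv.congr_deriv (by field_simp)).hasDerivWithinAt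
  · have hpow : (1 - y) ^ (γ - 1) ≤ 1 :=
      Real.rpow_le_one (sub_nonneg.2 hy.2) (sub_le_self 1 hy.1) (sub_nonneg.2 hγ)
    have hpow' : 0 ≤ (1 - y) ^ (γ - 1) := Real.rpow_nonneg (sub_nonneg.2 hy.2) _
    rw [← NNReal.coe_le_coe, coe_nnnorm, norm_neg, Real.norm_of_nonneg (by positivity)]
    push_cast
    gcongr

theorem convexOn_crossBranch (hγ : 1 ≤ γ) : ConvexOn ℝ (Iic 1) (crossBranch γ) := by
  have hcomp := (convexOn_rpow hγ).comp_affineMap (AffineMap.const ℝ ℝ 1 - AffineMap.id ℝ ℝ)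
  have hpre : (AffineMap.const ℝ ℝ 1 - AffineMap.id ℝ ℝ : ℝ →ᵃ[ℝ] ℝ) ⁻¹' Ici (0 : ℝ) = Iic 1 := by
    ext y; simp
  rw [hpre] at hcomp
  have hsmul := hcomp.smul (c := (2 * γ)⁻¹) (by positivity)
  refine hsmul.congr fun y _ => ?_
  simp [crossBranch, div_eq_inv_mul]

theorem crossBranch_sub_le (hγ : 1 ≤ γ) {x y : ℝ} (hx : x ∈ Icc (0 : ℝ) 1)
    (hy : y ∈ Icc (0 : ℝ) 1) (hxy : x ≤ y) :
    crossBranch γ x - crossBranch γ y ≤ (y - x) / 2 := by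
  have h := (lipschitzOnWith_crossBranch hγ).dist_le_mul x hx y hy
  rw [dist_comm x, Real.dist_eq, Real.dist_eq, abs_of_nonneg (sub_nonneg.2 hxy)] at h
  push_cast at h
  linarith [le_abs_self (crossBranch γ x - crossBranch γ y)]

theorem strictMonoOn_neutralBranch (hγ : 1 ≤ γ) :
    StrictMonoOn (neutralBranch γ) (Icc 0 1) := by
  intro x hx y hy hxy
  have := crossBranch_sub_le hγ hx hy hxy.le
  unfold neutralBranch
  linarith

theorem mapsTo_neutralBranch (hγ : 1 ≤ γ) : MapsTo (neutralBranch γ) (Icc 0 1) (Icc 0 1) := by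
  intro y hy
  refine ⟨add_nonneg hy.1 (crossBranch_nonneg (by linarith) hy.2), ?_⟩
  rw [← neutralBranch_one (γ := γ) (by linarith)]
  exact (strictMonoOn_neutralBranch hγ).monotoneOn hy (right_mem_Icc.2 zero_le_one) hy.2

theorem lipschitzOnWith_neutralBranch (hγ : 1 ≤ γ) :
    LipschitzOnWith 1 (neutralBranch γ) (Icc 0 1) := by
  refine lipschitzOnWith_of_dist_le_mul_sub fun x hx y hy hxy => ?_
  have hmono := (strictMonoOn_neutralBranch hγ) hx hy hxy
  have hanti := antitoneOn_crossBranch (γ := γ) (by linarith) hx.2 hy.2 hxy.le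
  rw [dist_comm, Real.dist_eq, abs_of_pos (sub_pos.2 hmono), NNReal.coe_one, one_mul]
  unfold neutralBranch
  linarith

theorem convexOn_neutralBranch (hγ : 1 ≤ γ) : ConvexOn ℝ (Icc 0 1) (neutralBranch γ) :=
  (convexOn_id (convex_Icc 0 1)).add
    ((convexOn_crossBranch hγ).subset Icc_subset_Iic_self (convex_Icc 0 1))

theorem neutralBranch_iterate_zero_mem_Ico (hγ : 1 ≤ γ) (n : ℕ) :
    (neutralBranch γ)^[n] 0 ∈ Ico (0 : ℝ) 1 := by
  induction n with
  | zero => simp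
  | succ n ih =>
    rw [Function.iterate_succ_apply']
    refine ⟨(mapsTo_neutralBranch hγ (Ico_subset_Icc_self ih)).1, ?_⟩
    conv_rhs => rw [← neutralBranch_one (γ := γ) (by linarith)]
    exact strictMonoOn_neutralBranch hγ (Ico_subset_Icc_self ih) (right_mem_Icc.2 zero_le_one) ih.2

theorem crossBranch_iterate_zero_le (hγ : 1 < γ) {n : ℕ} (hn : n ≠ 0) :
    crossBranch γ ((neutralBranch γ)^[n] 0) ≤
      (n * ((γ - 1) / (2 * γ))) ^ (-(γ / (γ - 1))) / (2 * γ) := by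
  have hβ : 0 < γ - 1 := sub_pos.2 hγ
  let u : ℕ → ℝ := fun k => 1 - (neutralBranch γ)^[k] 0
  have hu : ∀ k, 0 < u k := fun k => sub_pos.2 (neutralBranch_iterate_zero_mem_Ico hγ.le k).2
  have hstep : ∀ k, u (k + 1) = u k - 1 / (2 * γ) * u k ^ (1 + (γ - 1)) := fun k => by
    simp only [u, Function.iterate_succ_apply', neutralBranch, crossBranch]
    rw [add_sub_cancel]; ring
  have hdecay : n * ((γ - 1) / (2 * γ)) ≤ u n ^ (-(γ - 1)) := by
    rw [← one_div_mul_eq_div]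
    exact natCast_mul_le_rpow_neg hβ.le hu hstep n
  have hexp : u n ^ γ = (u n ^ (-(γ - 1))) ^ (-(γ / (γ - 1))) := by
    rw [← Real.rpow_mul (hu n).le, neg_mul_neg, mul_div_cancel₀ _ hβ.ne']
  change u n ^ γ / (2 * γ) ≤ _
  rw [hexp]
  gcongr ?_ / _
  exact Real.rpow_le_rpow_of_nonpos (by positivity) hdecay (neg_nonpos.2 (by positivity))

/- The iterate is convex, so on `[0, G 0]` (where `G 0 = 1 / (2 * γ)`) its slopes are at most its
slope over the next interval `[G 0, G (G 0)]` of the orbit of `0`. -/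
theorem lipschitzOnWith_neutralBranch_iterate (hγ : 1 ≤ γ) (n : ℕ) :
    LipschitzOnWith
      (crossBranch γ ((neutralBranch γ)^[n + 1] 0) / crossBranch γ (1 / (2 * γ))).toNNReal
      (neutralBranch γ)^[n] (Icc 0 (1 / (2 * γ))) := by
  have hmaps := mapsTo_neutralBranch hγ
  have hmono := (strictMonoOn_neutralBranch hγ).monotoneOn
  have hc := neutralBranch_iterate_zero_mem_Ico hγ 1
  have hd := neutralBranch_iterate_zero_mem_Ico hγ 2
  have hsub : ∀ y, neutralBranch γ y - y = crossBranch γ y := fun y => by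
    simp [neutralBranch]
  have hcd : (neutralBranch γ)^[1] 0 < (neutralBranch γ)^[2] 0 := by
    have := strictMonoOn_neutralBranch hγ (by simp) (Ico_subset_Icc_self hc)
      (show (0 : ℝ) < neutralBranch γ 0 by rw [neutralBranch_zero]; positivity)
    exact this
  have hlip := lipschitzOnWith_of_convexOn_of_monotoneOn
    (convexOn_iterate (convexOn_neutralBranch hγ) hmono hmaps n)
    (monotoneOn_iterate hmono hmaps n) (Ico_subset_Icc_self hc) (Ico_subset_Icc_self hd) hcd
  rw [← Function.iterate_add_apply, ← Function.iterate_add_apply, Function.iterate_succ_apply' _ 1,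
    Function.iterate_succ_apply' _ (n + 1), hsub, hsub, Function.iterate_one,
    neutralBranch_zero] at hlip
  refine hlip.mono fun y hy => ⟨⟨hy.1, hy.2.trans ?_⟩, hy.2⟩
  rw [← neutralBranch_zero]
  exact hc.2.le

theorem mapsTo_neutralBranch_iterate (hγ : 1 ≤ γ) (n : ℕ) :
    MapsTo (neutralBranch γ)^[n] (Icc 0 (1 / (2 * γ))) (Icc 0 1) := by
  refine ((mapsTo_neutralBranch hγ).iterate n).mono_left (Icc_subset_Icc_right ?_)
  rw [div_le_one] <;> linarith

theorem exists_lipschitzOnWith_truncPow_neutralBranch_iterate (hγ : 1 < γ) :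
    ∃ K : ℝ≥0, 0 < K ∧ ∀ n : ℕ, LipschitzOnWith (truncPow K (γ / (γ - 1)) (n + 1 : ℕ))
      (neutralBranch γ)^[n] (Icc 0 (1 / (2 * γ))) := by
  have : 0 < γ - 1 := sub_pos.2 hγ
  have hc : 1 / (2 * γ) < 1 := by rw [div_lt_one] <;> linarith
  have hcross : 0 < crossBranch γ (1 / (2 * γ)) :=
    div_pos (Real.rpow_pos_of_pos (sub_pos.2 hc) γ) (by positivity)
  let K := ((γ - 1) / (2 * γ)) ^ (-(γ / (γ - 1))) / (2 * γ) / crossBranch γ (1 / (2 * γ))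
  have hK : 0 < K := by positivity
  refine ⟨K.toNNReal, Real.toNNReal_pos.2 hK, fun n => ?_⟩
  have hone : LipschitzOnWith 1 (neutralBranch γ)^[n] (Icc 0 (1 / (2 * γ))) := by
    simpa using (lipschitzOnWith_iterate (lipschitzOnWith_neutralBranch hγ.le)
      (mapsTo_neutralBranch hγ.le) n).mono (Icc_subset_Icc_right hc.le)
  refine min_rec' (LipschitzOnWith · (neutralBranch γ)^[n] _) hone ?_
  refine (lipschitzOnWith_neutralBranch_iterate hγ.le n).weaken (Real.toNNReal_le_iff_le_coe.2 ?_)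
  rw [NNReal.coe_mul, Real.coe_toNNReal K hK.le, NNReal.coe_rpow, NNReal.coe_natCast]
  calc _ ≤ ((n + 1 : ℕ) * ((γ - 1) / (2 * γ))) ^ (-(γ / (γ - 1))) / (2 * γ) /
        crossBranch γ (1 / (2 * γ)) := by
        gcongr
        exact crossBranch_iterate_zero_le hγ n.succ_ne_zero
    _ = K * ((n + 1 : ℕ) : ℝ) ^ (-(γ / (γ - 1))) := by
        rw [Real.mul_rpow (by positivity) (by positivity)]; ring

end InverseBranches

section Dynamics

open Set

theorem DeltaP_subset_Ioo (T : ℝ → ℝ) (n : ℕ) : DeltaP T n ⊆ Ioo 0 1 := by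
  cases n <;> exact inter_subset_right

theorem mapsTo_iterate_DeltaP (T : ℝ → ℝ) (n : ℕ) : MapsTo T^[n] (DeltaP T n) (DeltaP T 0) := by
  induction n with
  | zero => exact mapsTo_id _
  | succ n ih => exact fun x hx => ih hx.1

theorem mapsTo_iterate_deltaMs (T : ℝ → ℝ) (n : ℕ) :
    MapsTo T^[n + 1] (deltaMs T (n + 1)) (DeltaP T 0) :=
  fun _ hx => mapsTo_iterate_DeltaP T n hx.1

namespace IsPikovsky

variable {γ : ℝ} {T : ℝ → ℝ}

theorem map_neg (hT : IsPikovsky γ T) {x : ℝ} (hx : x ∈ Ioo (0 : ℝ) 1) : T (-x) = -T x := by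
  simpa using hT.2.2.2 (-x) ⟨by linarith [hx.2], by linarith [hx.1]⟩

theorem eq_neutralBranch (hT : IsPikovsky γ T) {x : ℝ} (hx : x ∈ Ioo (0 : ℝ) 1) (hTx : 0 < T x) :
    x = neutralBranch γ (T x) := by
  have hcx : 1 / (2 * γ) ≤ x := by
    by_contra! h
    exact hTx.not_ge (hT.2.1 x ⟨hx.1, h.le⟩).1.2
  exact (hT.2.2.1 x ⟨hcx, hx.2.le⟩).2

theorem lt_of_map_lt_zero (hT : IsPikovsky γ T) {x : ℝ} (hx : x ≤ 1) (hTx : T x < 0) :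
    x < 1 / (2 * γ) := by
  by_contra! h
  exact hTx.not_ge (hT.2.2.1 x ⟨h, hx⟩).1.1

theorem eq_neg_crossBranch (hT : IsPikovsky γ T) {x : ℝ} (hx : x ∈ Ioo (-1 : ℝ) 0)
    (hTx : 0 < T x) : x = -crossBranch γ (T x) := by
  have hodd : T x = -T (-x) := hT.2.2.2 x (Ioo_subset_Ico_self hx)
  have hcx := hT.lt_of_map_lt_zero (x := -x) (by linarith [hx.1]) (by linarith)
  rw [hodd, crossBranch, sub_neg_eq_add, ← (hT.2.1 (-x) ⟨neg_pos.2 hx.2, hcx.le⟩).2, neg_neg]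

theorem DeltaP_zero (hT : IsPikovsky γ T) (hγ : 1 ≤ γ) : DeltaP T 0 = Ioo 0 (1 / (2 * γ)) := by
  ext x
  refine ⟨fun h => ⟨h.2.1, hT.lt_of_map_lt_zero h.2.2.le h.1.2⟩, fun h => ?_⟩
  have hc : 1 / (2 * γ) ≤ 1 := by rw [div_le_one] <;> linarith
  obtain ⟨hTx, hxT⟩ := hT.2.1 x ⟨h.1, h.2.le⟩
  refine ⟨⟨hTx.1.lt_of_ne' fun h1 => h.1.ne' ?_, hTx.2.lt_of_ne fun h0 => h.2.ne ?_⟩,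
    h.1, h.2.trans_le hc⟩
  · rw [hxT, h1, add_neg_cancel, Real.zero_rpow (by linarith), zero_div]
  · rw [hxT, h0, add_zero, Real.one_rpow]

theorem DeltaM_eq_neg (hT : IsPikovsky γ T) (n : ℕ) : DeltaM T n = -DeltaP T n := by
  have hstep {U V : Set ℝ} (hUV : U = -V) :
      T ⁻¹' U ∩ Ioo (-1) 0 = -(T ⁻¹' V ∩ Ioo 0 1) := by
    ext x
    simp only [hUV, mem_inter_iff, mem_preimage, Set.mem_neg, mem_Ioo, neg_pos, neg_lt (a := x)]
    refine and_congr_right' and_comm |>.trans (and_congr_left fun ⟨h₀, h₁⟩ => ?_)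
    rw [hT.2.2.2 x ⟨h₁.le, h₀⟩, neg_neg]
  induction n with
  | zero => exact hstep (by simp)
  | succ n ih => exact hstep ih

theorem deltaPs_eq_neg (hT : IsPikovsky γ T) (n : ℕ) : deltaPs T n = -deltaMs T n := by
  ext x
  simp only [deltaPs, deltaMs, hT.DeltaM_eq_neg, mem_inter_iff, mem_preimage, Set.mem_neg, neg_neg]
  refine and_congr_left fun hx => ?_
  rw [hT.map_neg (DeltaP_subset_Ioo T 0 hx)]

theorem iterate_neg_of_mem_DeltaP (hT : IsPikovsky γ T) {n : ℕ} {x : ℝ} (hx : x ∈ DeltaP T n) :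
    T^[n] (-x) = -T^[n] x := by
  induction n generalizing x with
  | zero => rfl
  | succ n ih => rw [Function.iterate_succ_apply, hT.map_neg hx.2, ih hx.1]; rfl

theorem leftInvOn_iterate_DeltaP (hT : IsPikovsky γ T) (n : ℕ) :
    LeftInvOn (neutralBranch γ)^[n] T^[n] (DeltaP T n) := by
  induction n with
  | zero => exact fun _ _ => rfl
  | succ n ih =>
    intro x hx
    rw [Function.iterate_succ_apply', Function.iterate_succ_apply, ih hx.1]
    exact (hT.eq_neutralBranch hx.2 (DeltaP_subset_Ioo T n hx.1).1).symm

theorem iterate_neg_of_mem_deltaMs (hT : IsPikovsky γ T) {n : ℕ} {x : ℝ}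
    (hx : x ∈ deltaMs T (n + 1)) : T^[n + 1] (-x) = -T^[n + 1] x := by
  have hodd : T (-x) = -T x := by rw [hT.2.2.2 x (Ioo_subset_Ico_self hx.2.2), neg_neg]
  exact (congrArg T^[n] hodd).trans (hT.iterate_neg_of_mem_DeltaP hx.1)

theorem leftInvOn_iterate_deltaMs (hT : IsPikovsky γ T) (n : ℕ) :
    LeftInvOn (fun y => -crossBranch γ ((neutralBranch γ)^[n] y)) T^[n + 1]
      (deltaMs T (n + 1)) := fun x hx => by
  have hG : (neutralBranch γ)^[n] (T^[n + 1] x) = T x := hT.leftInvOn_iterate_DeltaP n hx.1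
  simp only [hG]
  exact (hT.eq_neg_crossBranch hx.2.2 hx.2.1.1).symm

end IsPikovsky

end Dynamics

section Measure

open Set

theorem volume_image_le {g : ℝ → ℝ} {s : Set ℝ} {K : ℝ≥0} (hg : LipschitzOnWith K g s) :
    volume (g '' s) ≤ K * volume s := by
  simpa [← MeasureTheory.hausdorffMeasure_real] using hg.hausdorffMeasure_image_le zero_le_one

theorem volume_inter_preimage_le {F g : ℝ → ℝ} {S B : Set ℝ} {K : ℝ≥0} (hF : MapsTo F S B)
    (hgF : LeftInvOn g F S) (hg : LipschitzOnWith K g B) (A : Set ℝ) :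
    volume (S ∩ F ⁻¹' A) ≤ K * volume (A ∩ B) :=
  calc volume (S ∩ F ⁻¹' A) ≤ volume (g '' (A ∩ B)) :=
        measure_mono fun x hx => ⟨F x, ⟨hx.2, hF hx.1⟩, hgF hx.1⟩
    _ ≤ K * volume (A ∩ B) := volume_image_le (hg.mono inter_subset_right)

theorem volume_union_neg_inter_preimage_le {F g : ℝ → ℝ} {S B : Set ℝ} {K : ℝ≥0}
    (hF : MapsTo F S B) (hgF : LeftInvOn g F S) (hg : LipschitzOnWith K g B)
    (hodd : ∀ x ∈ S, F (-x) = -F x) (hB : MeasurableSet B) (hBneg : Disjoint B (-B))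
    (A : Set ℝ) : volume ((S ∪ -S) ∩ F ⁻¹' A) ≤ K * volume (A ∩ (B ∪ -B)) := by
  have hneg : -(-S ∩ F ⁻¹' A) = S ∩ F ⁻¹' (-A) := by
    ext x
    simp only [Set.mem_neg, mem_inter_iff, mem_preimage, neg_neg]
    exact and_congr_right fun hx => by rw [hodd x hx]
  have hB' : volume (A ∩ -B) = volume (-A ∩ B) := by
    rw [← Measure.measure_neg volume (A ∩ -B), Set.inter_neg, neg_neg]
  calc volume ((S ∪ -S) ∩ F ⁻¹' A) ≤ volume (S ∩ F ⁻¹' A) + volume (S ∩ F ⁻¹' (-A)) := by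
        rw [union_inter_distrib_right, ← hneg, Measure.measure_neg]
        exact measure_union_le _ _
    _ ≤ K * volume (A ∩ B) + K * volume (-A ∩ B) :=
        add_le_add (volume_inter_preimage_le hF hgF hg A) (volume_inter_preimage_le hF hgF hg (-A))
    _ = K * (volume (A ∩ B) + volume (A ∩ -B)) := by rw [mul_add, hB']
    _ ≤ K * (volume (A ∩ (B ∪ -B) ∩ B) + volume ((A ∩ (B ∪ -B)) \ B)) := by
        refine mul_le_mul' le_rfl (add_le_add (measure_mono fun x hx => ?_)
          (measure_mono fun x hx => ?_))
        · exact ⟨⟨hx.1, .inl hx.2⟩, hx.2⟩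
        · exact ⟨⟨hx.1, .inr hx.2⟩, hBneg.notMem_of_mem_right hx.2⟩
    _ = K * volume (A ∩ (B ∪ -B)) := by rw [measure_inter_add_sdiff _ hB]

theorem cylinder_succ_inter_preimage (T : ℝ → ℝ) {p : ℕ} {ℓ : ℕ → ℕ} (hℓ : ℓ p ≤ ℓ (p + 1))
    (A : Set ℝ) :
    cylinder T (p + 1) ℓ ∩ T^[ℓ (p + 1)] ⁻¹' A = cylinder T p ℓ ∩
      T^[ℓ p] ⁻¹' (smallDelta T (ℓ (p + 1) - ℓ p) ∩ T^[ℓ (p + 1) - ℓ p] ⁻¹' A) := by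
  rw [preimage_inter, ← preimage_comp, ← Function.iterate_add, Nat.sub_add_cancel hℓ,
    _root_.cylinder, _root_.cylinder, Finset.range_add_one, Finset.set_biInter_insert]
  ac_rfl

namespace IsPikovsky

variable {γ : ℝ} {T : ℝ → ℝ}

theorem Yset_eq (hT : IsPikovsky γ T) : Yset T = DeltaP T 0 ∪ -DeltaP T 0 := by
  rw [Yset, hT.DeltaM_eq_neg, union_comm]

theorem volume_union_neg_inter_preimage_iterate_le (hT : IsPikovsky γ T) (hγ : 1 ≤ γ) {n : ℕ}
    {g : ℝ → ℝ} {S : Set ℝ} {K : ℝ≥0} (hS : MapsTo T^[n] S (DeltaP T 0))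
    (hgS : LeftInvOn g T^[n] S) (hg : LipschitzOnWith K g (Icc 0 (1 / (2 * γ))))
    (hodd : ∀ x ∈ S, T^[n] (-x) = -T^[n] x) (A : Set ℝ) :
    volume ((S ∪ -S) ∩ T^[n] ⁻¹' A) ≤ K * volume (A ∩ Yset T) := by
  have hDelta := hT.DeltaP_zero hγ
  rw [hT.Yset_eq]
  refine volume_union_neg_inter_preimage_le hS hgS ?_ hodd ?_ ?_ A
  · exact hg.mono (hDelta ▸ Ioo_subset_Icc_self)
  · exact hDelta ▸ measurableSet_Ioo
  · exact disjoint_left.2 fun x hx hx' => (neg_pos.1 (DeltaP_subset_Ioo T 0 hx').1).not_gt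
      (DeltaP_subset_Ioo T 0 hx).1

theorem volume_smallDelta_inter_preimage_le (hT : IsPikovsky γ T) (hγ : 1 ≤ γ) {n : ℕ} {K : ℝ≥0}
    (hK : LipschitzOnWith K (neutralBranch γ)^[n] (Icc 0 (1 / (2 * γ)))) (A : Set ℝ) :
    volume (smallDelta T (n + 1) ∩ T^[n + 1] ⁻¹' A) ≤
      (1 / 2 * K : ℝ≥0) * volume (A ∩ Yset T) := by
  rw [smallDelta, hT.deltaPs_eq_neg]
  exact hT.volume_union_neg_inter_preimage_iterate_le hγ (mapsTo_iterate_deltaMs T n)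
    (hT.leftInvOn_iterate_deltaMs n)
    ((lipschitzOnWith_crossBranch hγ).comp hK (mapsTo_neutralBranch_iterate hγ n)).neg
    (fun _ => hT.iterate_neg_of_mem_deltaMs) A

theorem volume_bigDelta_inter_preimage_le (hT : IsPikovsky γ T) (hγ : 1 ≤ γ) {n : ℕ} {K : ℝ≥0}
    (hK : LipschitzOnWith K (neutralBranch γ)^[n] (Icc 0 (1 / (2 * γ)))) (A : Set ℝ) :
    volume (bigDelta T (n + 1) ∩ T^[n + 1] ⁻¹' A) ≤ K * volume (A ∩ Yset T) := by
  rw [bigDelta, hT.DeltaM_eq_neg, union_comm]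
  refine hT.volume_union_neg_inter_preimage_iterate_le hγ (mapsTo_iterate_DeltaP T (n + 1))
    (hT.leftInvOn_iterate_DeltaP (n + 1)) ?_ (fun _ => hT.iterate_neg_of_mem_DeltaP) A
  rw [Function.iterate_succ', ← one_mul K]
  exact (lipschitzOnWith_neutralBranch hγ).comp hK (mapsTo_neutralBranch_iterate hγ n)

theorem volume_smallDelta_union_bigDelta_inter_preimage_le (hT : IsPikovsky γ T) (hγ : 1 ≤ γ)
    {n : ℕ} {K : ℝ≥0} (hK : LipschitzOnWith K (neutralBranch γ)^[n] (Icc 0 (1 / (2 * γ))))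
    (A : Set ℝ) :
    volume ((smallDelta T (n + 1) ∪ bigDelta T (n + 1)) ∩ T^[n + 1] ⁻¹' A) ≤
      (3 / 2 * K : ℝ≥0) * volume (A ∩ Yset T) := by
  rw [union_inter_distrib_right]
  calc _ ≤ (1 / 2 * K : ℝ≥0) * volume (A ∩ Yset T) + K * volume (A ∩ Yset T) :=
        (measure_union_le _ _).trans (add_le_add
          (hT.volume_smallDelta_inter_preimage_le hγ hK A)
          (hT.volume_bigDelta_inter_preimage_le hγ hK A))
    _ = (3 / 2 * K : ℝ≥0) * volume (A ∩ Yset T) := by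
        rw [← add_mul, ← ENNReal.coe_add]
        congr 2
        ring

theorem volume_cylinder_inter_preimage_le (hT : IsPikovsky γ T) (hγ : 1 ≤ γ) {κ : ℕ → ℝ≥0}
    (hκ : ∀ n, LipschitzOnWith (κ (n + 1)) (neutralBranch γ)^[n] (Icc 0 (1 / (2 * γ))))
    {p : ℕ} {ℓ : ℕ → ℕ} (hℓ₀ : ℓ 0 ≠ 0) (hℓ : ∀ j < p, ℓ j < ℓ (j + 1)) (A : Set ℝ) :
    volume (cylinder T p ℓ ∩ T^[ℓ p] ⁻¹' A) ≤
      (3 / 2 * κ (ℓ 0) * ∏ j ∈ Finset.range p, 1 / 2 * κ (ℓ (j + 1) - ℓ j) : ℝ≥0) *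
        volume (A ∩ Yset T) := by
  induction p generalizing A with
  | zero =>
    obtain ⟨n, hn⟩ := Nat.exists_eq_succ_of_ne_zero hℓ₀
    simpa [_root_.cylinder, hn] using
      hT.volume_smallDelta_union_bigDelta_inter_preimage_le hγ (hκ n) A
  | succ p ih =>
    have hlt := hℓ p p.lt_succ_self
    obtain ⟨n, hn⟩ := Nat.exists_eq_succ_of_ne_zero (Nat.sub_ne_zero_of_lt hlt)
    rw [cylinder_succ_inter_preimage T hlt.le, Finset.prod_range_succ, hn]
    refine (ih (fun j hj => hℓ j (hj.trans p.lt_succ_self)) _).trans ?_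
    refine (mul_le_mul' le_rfl ((measure_mono inter_subset_left).trans
      (hT.volume_smallDelta_inter_preimage_le hγ (hκ n) A))).trans_eq ?_
    push_cast
    ring

theorem volume_Yset_le_one (hT : IsPikovsky γ T) (hγ : 1 ≤ γ) : volume (Yset T) ≤ 1 := by
  rw [hT.Yset_eq, hT.DeltaP_zero hγ]
  refine (measure_union_le _ _).trans ?_
  rw [Measure.measure_neg, Real.volume_Ioo, sub_zero,
    ← ENNReal.ofReal_add (by positivity) (by positivity)]
  refine ENNReal.ofReal_le_one.2 ?_
  field_simp
  linarith

theorem pikMeasure_cylinder_le (hT : IsPikovsky γ T) (hγ : 1 ≤ γ) {κ : ℕ → ℝ≥0}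
    (hκ : ∀ n, LipschitzOnWith (κ (n + 1)) (neutralBranch γ)^[n] (Icc 0 (1 / (2 * γ))))
    {p : ℕ} {ℓ : ℕ → ℕ} (hℓ₀ : ℓ 0 ≠ 0) (hℓ : ∀ j < p, ℓ j < ℓ (j + 1)) :
    pikMeasure (cylinder T p ℓ) ≤
      (3 / 4 * κ (ℓ 0) * ∏ j ∈ Finset.range p, 3 / 4 * κ (ℓ (j + 1) - ℓ j) : ℝ≥0) := by
  have hvol : volume (cylinder T p ℓ) ≤
      (3 / 2 * κ (ℓ 0) * ∏ j ∈ Finset.range p, 1 / 2 * κ (ℓ (j + 1) - ℓ j) : ℝ≥0) := by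
    simpa using (hT.volume_cylinder_inter_preimage_le hγ hκ hℓ₀ hℓ univ).trans
      (mul_le_of_le_one_right' (by simpa using hT.volume_Yset_le_one hγ))
  calc pikMeasure (cylinder T p ℓ) ≤ 2⁻¹ * volume (cylinder T p ℓ) :=
        mul_le_mul' le_rfl (Measure.restrict_apply_le _ _)
    _ ≤ (2⁻¹ * (3 / 2 * κ (ℓ 0) * ∏ j ∈ Finset.range p, 1 / 2 * κ (ℓ (j + 1) - ℓ j)) : ℝ≥0) := by
        push_cast at hvol ⊢
        gcongr
    _ ≤ _ := by
        have hhalf : (1 / 2 : ℝ≥0) ≤ 3 / 4 := by rw [div_le_div_iff₀] <;> norm_num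
        rw [← mul_assoc, ← mul_assoc, show (2⁻¹ * (3 / 2) : ℝ≥0) = 3 / 4 by norm_num]
        gcongr

end IsPikovsky

end Measure

/-- estimates (5.4)–(5.5) of the paper: for `γ > 1` and the Pikovsky map `T`
with parameter `γ` there are constants `Λ > 1` and `C_γ > 0` depending only on `γ` such that
for every `n ≥ 1` and every admissible tuple `(ℓ₀,…,ℓ_p)`:
(a) `λ(C_n(ℓ₀)) ≤ C_γ ℓ₀^{−γ/(γ−1)}` when `p = 0`;
(b) for `p ≥ 1`,
`λ(C_n(ℓ₀,…,ℓ_p)) ≤ min{Λ⁻¹, C_γ ℓ₀^{−γ/(γ−1)}} ∏_{j<p} min{Λ⁻¹, C_γ (ℓ_{j+1}−ℓ_j)^{−γ/(γ−1)}}`;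
(c) for all `p ≥ 0`, `λ(C_n(ℓ₀,…,ℓ_p)) ≤ C_γ n^{−γ/(γ−1)}`. -/
theorem pikovsky_cylinder_estimates (γ : ℝ) (hγ : 1 < γ) (T : ℝ → ℝ) (hT : IsPikovsky γ T) :
    ∃ Λ : ℝ, 1 < Λ ∧ ∃ Cγ : ℝ, 0 < Cγ ∧
      ∀ n : ℕ, 1 ≤ n → ∀ (p : ℕ) (ℓ : ℕ → ℕ),
        1 ≤ ℓ 0 → (∀ j < p, ℓ j < ℓ (j+1)) →
        (p = 0 → n < ℓ 0) → (0 < p → ℓ (p-1) ≤ n ∧ n < ℓ p) →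
        ((p = 0 →
          pikMeasure (cylinder T p ℓ)
            ≤ ENNReal.ofReal (Cγ * ((ℓ 0 : ℝ) ^ (-(γ / (γ - 1)))))) ∧
        (1 ≤ p →
          pikMeasure (cylinder T p ℓ)
            ≤ ENNReal.ofReal
              (min Λ⁻¹ (Cγ * ((ℓ 0 : ℝ) ^ (-(γ / (γ - 1))))) *
                ∏ j ∈ Finset.range p,
                  min Λ⁻¹ (Cγ * (((ℓ (j+1) - ℓ j : ℕ) : ℝ) ^ (-(γ / (γ - 1))))))) ∧
        pikMeasure (cylinder T p ℓ)
          ≤ ENNReal.ofReal (Cγ * ((n : ℝ) ^ (-(γ / (γ - 1)))))) := by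
  obtain ⟨K, hK, hG⟩ := exists_lipschitzOnWith_truncPow_neutralBranch_iterate hγ
  obtain ⟨M, hM⟩ := exists_forall_pow_mul_rpow_le (r := 3 / 4) (by positivity)
    (by rw [div_lt_one] <;> norm_num) (γ / (γ - 1))
  have hr : (3 / 4 : ℝ≥0) ≤ 1 := by rw [div_le_one] <;> norm_num
  have hM₁ : 1 ≤ M := by simpa using hM 0
  have hKM : K ≤ K * M := le_mul_of_one_le_right' hM₁
  refine ⟨((3 / 4 : ℝ≥0) : ℝ)⁻¹, by norm_num, (K * M : ℝ≥0), by positivity,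
    fun n hn p ℓ hℓ₀ hℓ hp₀ hp => ?_⟩
  have hcyl := hT.pikMeasure_cylinder_le hγ.le (κ := fun d => truncPow K (γ / (γ - 1)) d) hG
    (Nat.one_le_iff_ne_zero.1 hℓ₀) hℓ
  have hbound (b : ℝ≥0) (hb : _ ≤ b) := hcyl.trans (ENNReal.coe_le_coe.2 hb)
  simp only [← ENNReal.ofReal_coe_nnreal] at hbound
  have hfactor := mul_truncPow_le_min (α := γ / (γ - 1)) hr hKM
  refine ⟨?_, fun _ => ?_, ?_⟩
  · rintro rfl
    simpa using hbound (K * M * ℓ 0 ^ (-(γ / (γ - 1))))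
      (by simpa using (hfactor (ℓ 0)).trans (min_le_right _ _))
  · simpa [-Nat.cast_tsub] using
      hbound _ (mul_le_mul' (hfactor _) (Finset.prod_le_prod' fun _ _ => hfactor _))
  · have hnp : n ≤ ℓ p := by
      rcases p.eq_zero_or_pos with rfl | hpos
      exacts [(hp₀ rfl).le, (hp hpos).2.le]
    simpa using hbound _ (mul_truncPow_mul_prod_gaps_le (div_pos (by linarith) (by linarith)).le
      hr hM (fun j hj => (hℓ j hj).le) hn hnp)

end
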